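/- Let (X,ρ) be a metric space and let Y be a nonempty closed discrete subset of X such that for every x ∈ X∖Y the following holds: there is η_x > 0 and at most one point y_x ∈ Y with ρ(x,y_x) < η_x, while ρ(x,y) = η_x for every other y ∈ Y. Then CL(Y), equipped with the Wijsman topology of the restricted metric ρ|_Y, is a closed subspace of (CL(X), W_ρ); that is, CL(Y) ⊆ CL(X) is closed in (CL(X), W_ρ) and the subspace topology it inherits from W_ρ coincides with W_{ρ|Y}. -/

import Mathlib

/-!
The inclusion `CL Y → CL X` preserves the distance functionals at points of `Y`, so the topology
inherited from `W_ρ` is at least as fine as `W_{ρ|Y}`. Conversely, for `x ∉ Y` the functional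
`ρ(x, ·)` takes at most two values on `CL Y`, according to whether `A` contains the exceptional
point `y_x`. Since `Y` is discrete, `y ∈ A` is a clopen condition on `A` in `W_{ρ|Y}`
(`isClopen_mem_wijsman`), hence `ρ(x, ·)` is continuous there (`continuous_infDist_image`).
Finally, as `Y` is closed, a closed set `B` is contained in `Y` iff `ρ(x, B) ≥ ρ(x, Y)` for all
`x ∉ Y`, which is a closed condition in `W_ρ`.
-/

open Cardinal Set Metric Topology

universe u v

/-- The hyperspace of all nonempty closed subsets of a topological space. -/
def CL (X : Type u) [TopologicalSpace X] : Type u :=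
  {A : Set X // A.Nonempty ∧ IsClosed A}

/-- The Wijsman topology on `CL X` determined by a metric `m` on `X`:
the weak (initial) topology determined by the distance functionals
`A ↦ ρ(x, A) = inf {ρ(x,a) : a ∈ A}`, `x ∈ X`. -/
noncomputable def wijsman (X : Type u) [TopologicalSpace X] (m : MetricSpace X) :
    TopologicalSpace (CL X) :=
  ⨅ x : X, TopologicalSpace.induced
    (fun A : CL X => @Metric.infDist X m.toPseudoMetricSpace x A.1) inferInstance

/-- The lower Vietoris topology on `CL X`, with subbase `{U⁻ : U open}` where
`U⁻ = {A ∈ CL X : A ∩ U ≠ ∅}`. -/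
def lowerVietoris (X : Type u) [TopologicalSpace X] : TopologicalSpace (CL X) :=
  TopologicalSpace.generateFrom
    { S | ∃ U : Set X, IsOpen U ∧ S = { A : CL X | (A.1 ∩ U).Nonempty } }

/-- The Vietoris topology on `CL X`, with subbase `{U⁻ : U open} ∪ {U⁺ : U open}`. -/
def vietoris (X : Type u) [TopologicalSpace X] : TopologicalSpace (CL X) :=
  TopologicalSpace.generateFrom
    ({ S | ∃ U : Set X, IsOpen U ∧ S = { A : CL X | (A.1 ∩ U).Nonempty } } ∪
     { S | ∃ U : Set X, IsOpen U ∧ S = { A : CL X | A.1 ⊆ U } })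

/-- The subspace topology on a subset. -/
def subTop {Y : Type u} (t : TopologicalSpace Y) (S : Set Y) : TopologicalSpace ↥S :=
  TopologicalSpace.induced Subtype.val t

section CardinalFunctions

variable (Y : Type u) (t : TopologicalSpace Y)

/-- `ℬ` is a base of the topology `t`. -/
def IsBase (ℬ : Set (Set Y)) : Prop :=
  (∀ U ∈ ℬ, t.IsOpen U) ∧ ∀ U, t.IsOpen U → ∀ x ∈ U, ∃ V ∈ ℬ, x ∈ V ∧ V ⊆ U

/-- The weight: `ℵ₀` plus the least cardinality of a base. -/
noncomputable def weight : Cardinal.{u} :=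
  ℵ₀ + sInf { c : Cardinal.{u} | ∃ ℬ : Set (Set Y), IsBase Y t ℬ ∧ #↥ℬ = c }

/-- The density: `ℵ₀` plus the least cardinality of a dense subset. -/
noncomputable def density : Cardinal.{u} :=
  ℵ₀ + sInf { c : Cardinal.{u} | ∃ D : Set Y, @Dense Y t D ∧ #↥D = c }

/-- A π-base: a family of nonempty open sets such that every nonempty open set
contains a member. -/
def IsPiBase (𝒢 : Set (Set Y)) : Prop :=
  (∀ G ∈ 𝒢, t.IsOpen G ∧ G.Nonempty) ∧
    ∀ U : Set Y, t.IsOpen U → U.Nonempty → ∃ G ∈ 𝒢, G ⊆ U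

/-- The π-weight: `ℵ₀` plus the least cardinality of a π-base. -/
noncomputable def piWeight : Cardinal.{u} :=
  ℵ₀ + sInf { c : Cardinal.{u} | ∃ 𝒢 : Set (Set Y), IsPiBase Y t 𝒢 ∧ #↥𝒢 = c }

/-- A local π-base at `y`: a family of nonempty open sets such that every open
neighborhood of `y` contains a member. -/
def IsLocalPiBase (y : Y) (𝒢 : Set (Set Y)) : Prop :=
  (∀ G ∈ 𝒢, t.IsOpen G ∧ G.Nonempty) ∧
    ∀ U : Set Y, t.IsOpen U → y ∈ U → ∃ G ∈ 𝒢, G ⊆ U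

/-- The π-character at a point. -/
noncomputable def piCharacterAt (y : Y) : Cardinal.{u} :=
  ℵ₀ + sInf { c : Cardinal.{u} | ∃ 𝒢 : Set (Set Y), IsLocalPiBase Y t y 𝒢 ∧ #↥𝒢 = c }

/-- The π-character of the space. -/
noncomputable def piCharacter : Cardinal.{u} := ⨆ y : Y, piCharacterAt Y t y

/-- The pseudocharacter at a point: `ℵ₀` plus the least cardinality of a family of
open sets whose intersection is `{y}`. -/
noncomputable def pseudoCharacterAt (y : Y) : Cardinal.{u} :=
  ℵ₀ + sInf { c : Cardinal.{u} | ∃ 𝒰 : Set (Set Y),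
    (∀ U ∈ 𝒰, t.IsOpen U) ∧ ⋂₀ 𝒰 = {y} ∧ #↥𝒰 = c }

/-- The pseudocharacter of the space. -/
noncomputable def pseudoCharacter : Cardinal.{u} := ⨆ y : Y, pseudoCharacterAt Y t y

/-- The pseudoweight: `ℵ₀` plus the least cardinality of a point-separating family
of open sets. -/
noncomputable def pseudoWeight : Cardinal.{u} :=
  ℵ₀ + sInf { c : Cardinal.{u} | ∃ 𝒰 : Set (Set Y), (∀ U ∈ 𝒰, t.IsOpen U) ∧
    (∀ x y : Y, x ≠ y → ∃ U ∈ 𝒰, (x ∈ U ∧ y ∉ U) ∨ (y ∈ U ∧ x ∉ U)) ∧ #↥𝒰 = c }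

/-- The net weight: `ℵ₀` plus the least cardinality of a network. -/
noncomputable def netWeight : Cardinal.{u} :=
  ℵ₀ + sInf { c : Cardinal.{u} | ∃ 𝒩 : Set (Set Y),
    (∀ U : Set Y, t.IsOpen U → ∀ x ∈ U, ∃ M ∈ 𝒩, x ∈ M ∧ M ⊆ U) ∧ #↥𝒩 = c }

/-- The tightness at a point. -/
noncomputable def tightnessAt (y : Y) : Cardinal.{u} :=
  ℵ₀ + sInf { κ : Cardinal.{u} | ∀ A : Set Y, y ∈ @closure Y t A →
      ∃ B ⊆ A, #↥B ≤ κ ∧ y ∈ @closure Y t B }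

/-- The tightness of the space. -/
noncomputable def tightness : Cardinal.{u} := ⨆ y : Y, tightnessAt Y t y

/-- The Lindelöf number. -/
noncomputable def lindelofNumber : Cardinal.{u} :=
  ℵ₀ + sInf { κ : Cardinal.{u} | ∀ 𝒞 : Set (Set Y), (∀ U ∈ 𝒞, t.IsOpen U) →
      ⋃₀ 𝒞 = Set.univ → ∃ 𝒟 ⊆ 𝒞, #↥𝒟 ≤ κ ∧ ⋃₀ 𝒟 = Set.univ }

/-- The extent: `ℵ₀` plus the supremum of the cardinalities of closed discrete
subspaces. -/
noncomputable def extent : Cardinal.{u} :=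
  ℵ₀ + sSup { c : Cardinal.{u} | ∃ D : Set Y, @IsClosed Y t D ∧
    @DiscreteTopology ↥D (subTop t D) ∧ #↥D = c }

/-- The spread: `ℵ₀` plus the supremum of the cardinalities of discrete subspaces. -/
noncomputable def spread : Cardinal.{u} :=
  ℵ₀ + sSup { c : Cardinal.{u} | ∃ D : Set Y,
    @DiscreteTopology ↥D (subTop t D) ∧ #↥D = c }

/-- The diagonal degree: `ℵ₀` plus the least cardinality of a family of open subsets
of `Y × Y` whose intersection is the diagonal. -/
noncomputable def diagonalDegree : Cardinal.{u} :=
  ℵ₀ + sInf { c : Cardinal.{u} | ∃ 𝒢 : Set (Set (Y × Y)),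
    (∀ G ∈ 𝒢, @IsOpen (Y × Y) (@instTopologicalSpaceProd Y Y t t) G) ∧
    ⋂₀ 𝒢 = { p : Y × Y | p.1 = p.2 } ∧ #↥𝒢 = c }

/-- The uniform weight: `ℵ₀` plus the least cardinality of a base of a compatible
uniformity. -/
noncomputable def uniformWeight : Cardinal.{u} :=
  ℵ₀ + sInf { c : Cardinal.{u} | ∃ U : UniformSpace Y, U.toTopologicalSpace = t ∧
    ∃ 𝒲 : Set (Set (Y × Y)), (∀ W ∈ 𝒲, W ∈ @uniformity Y U) ∧
      (∀ s ∈ @uniformity Y U, ∃ W ∈ 𝒲, W ⊆ s) ∧ #↥𝒲 = c }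

/-- The weak weight: the least weight of a Tychonoff space onto which `Y` maps by a
continuous bijection. -/
noncomputable def weakWeight : Cardinal.{u} :=
  sInf { c : Cardinal.{u} | ∃ (Z : Type u) (s : TopologicalSpace Z) (f : Y → Z),
    @T35Space Z s ∧ @Continuous Y Z t s f ∧ Function.Bijective f ∧ weight Z s = c }

end CardinalFunctions

/-- The hereditary version of a cardinal function: the supremum over all subspaces. -/
noncomputable def hered (f : (Z : Type u) → TopologicalSpace Z → Cardinal.{u})
    (Y : Type u) (t : TopologicalSpace Y) : Cardinal.{u} :=
  ⨆ S : Set Y, f ↥S (subTop t S)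

theorem continuous_infDist_wijsman (X : Type u) [m : MetricSpace X] (x : X) :
    @Continuous (CL X) ℝ (wijsman X m) _ (fun A : CL X => infDist x A.1) :=
  continuous_iff_le_induced.2 (iInf_le _ x)

/-- If a ball `B(y, ε)` is `{y}`, then `y ∈ A` is equivalent both to `ρ(y, A) < ε` and to
`ρ(y, A) ≤ 0`. -/
theorem isClopen_mem_wijsman (Z : Type u) [m : MetricSpace Z] [DiscreteTopology Z] (y : Z) :
    @IsClopen (CL Z) (wijsman Z m) {A : CL Z | y ∈ A.1} := by
  let := wijsman Z m
  have hc := continuous_infDist_wijsman Z y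
  constructor
  · have : {A : CL Z | y ∈ A.1} = {A : CL Z | infDist y A.1 ≤ 0} := by
      ext A
      simp only [mem_ofPred_eq]
      rw [A.2.2.mem_iff_infDist_zero A.2.1]
      exact ⟨le_of_eq, fun h => le_antisymm h infDist_nonneg⟩
    rw [this]
    exact isClosed_le hc continuous_const
  · obtain ⟨ε, hε, hball⟩ := Metric.isOpen_iff.1 (isOpen_discrete ({y} : Set Z)) y rfl
    have : {A : CL Z | y ∈ A.1} = {A : CL Z | infDist y A.1 < ε} := by
      ext A
      simp only [mem_ofPred_eq]
      constructor
      · intro h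
        rwa [infDist_zero_of_mem h]
      · intro h
        obtain ⟨z, hz, hzε⟩ := (infDist_lt_iff A.2.1).1 h
        have hzy : z = y := hball (by rwa [mem_ball, dist_comm])
        exact hzy ▸ hz
    rw [this]
    exact isOpen_lt hc continuous_const

theorem infDist_eq_of_forall {X : Type u} [MetricSpace X] {x : X} {s : Set X} {r : ℝ}
    (hle : ∀ y ∈ s, r ≤ dist x y) (hmem : ∃ y ∈ s, dist x y = r) : infDist x s = r := by
  obtain ⟨y, hy, rfl⟩ := hmem
  exact le_antisymm (infDist_le_dist_of_mem hy) ((le_infDist ⟨y, hy⟩).2 fun {_} hz => hle _ hz)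

/-- On `CL Y` the functional `ρ(x, ·)` of a point `x ∉ Y` is either constant, or a step function
of the clopen condition `y ∈ A`. -/
theorem continuous_infDist_image (X : Type u) [MetricSpace X] (Y : Set X)
    [DiscreteTopology ↥Y] (x : X) (η : ℝ)
    (hsub : { y ∈ Y | dist x y < η }.Subsingleton)
    (hη : ∀ y ∈ Y, dist x y < η ∨ dist x y = η) :
    @Continuous (CL ↥Y) ℝ (wijsman ↥Y inferInstance) _
      (fun A : CL ↥Y => infDist x (Subtype.val '' A.1)) := by
  classical
  let := wijsman ↥Y inferInstance
  by_cases hex : ∃ y ∈ Y, dist x y < η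
  · obtain ⟨y, hyY, hy⟩ := hex
    have hother : ∀ z ∈ Y, z ≠ y → dist x z = η := fun z hz hzy =>
      (hη z hz).resolve_left fun hlt => hzy (hsub ⟨hz, hlt⟩ ⟨hyY, hy⟩)
    have heq : (fun A : CL ↥Y => infDist x (Subtype.val '' A.1)) =
        fun A : CL ↥Y => if (⟨y, hyY⟩ : ↥Y) ∈ A.1 then dist x y else η := by
      funext A
      split_ifs with hA
      · refine infDist_eq_of_forall ?_ ⟨y, ⟨_, hA, rfl⟩, rfl⟩
        rintro _ ⟨z, -, rfl⟩
        by_cases hzy : (z : X) = y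
        · rw [hzy]
        · rw [hother z z.2 hzy]
          exact hy.le
      · have hd : ∀ z ∈ A.1, dist x (z : X) = η := fun z hz =>
          hother z z.2 fun hzy => hA ((Subtype.ext hzy : z = ⟨y, hyY⟩) ▸ hz)
        obtain ⟨z, hz⟩ := A.2.1
        refine infDist_eq_of_forall ?_ ⟨z, ⟨z, hz, rfl⟩, hd z hz⟩
        rintro _ ⟨w, hw, rfl⟩
        exact (hd w hw).ge
    rw [heq]
    refine Continuous.if (fun A hA => ?_) continuous_const continuous_const
    rw [(isClopen_mem_wijsman ↥Y ⟨y, hyY⟩).frontier_eq] at hA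
    exact hA.elim
  · push Not at hex
    have heq : (fun A : CL ↥Y => infDist x (Subtype.val '' A.1)) = fun _ => η := by
      funext A
      obtain ⟨z, hz⟩ := A.2.1
      refine infDist_eq_of_forall ?_
        ⟨z, ⟨z, hz, rfl⟩, (hη z z.2).resolve_left (hex z z.2).not_gt⟩
      rintro _ ⟨w, -, rfl⟩
      exact hex w w.2
    rw [heq]
    exact continuous_const

/-- if `Y` is a nonempty closed discrete subset of `X` such that every
`x ∉ Y` admits `η > 0` with at most one `y ∈ Y` with `ρ(x,y) < η` and `ρ(x,y) = η`
for every other `y ∈ Y`, then `(CL(Y), W_{ρ|Y})` is a closed subspace of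
`(CL(X), W_ρ)` via the natural inclusion. -/
theorem stmt_11 (X : Type u) [MetricSpace X] (Y : Set X) (hYne : Y.Nonempty)
    (hYcl : IsClosed Y) (hYdisc : DiscreteTopology ↥Y)
    (h : ∀ x ∈ Yᶜ, ∃ η > (0:ℝ),
      { y ∈ Y | dist x y < η }.Subsingleton ∧
      ∀ y ∈ Y, dist x y < η ∨ dist x y = η) :
    @Topology.IsClosedEmbedding (CL ↥Y) (CL X) (wijsman ↥Y inferInstance)
      (wijsman X ‹MetricSpace X›)
      (fun A => ⟨Subtype.val '' A.1, A.2.1.image Subtype.val,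
        hYcl.isClosedEmbedding_subtypeVal.isClosedMap A.1 A.2.2⟩) := by
  let tY : TopologicalSpace (CL ↥Y) := wijsman ↥Y inferInstance
  let tX : TopologicalSpace (CL X) := wijsman X ‹MetricSpace X›
  set i : CL ↥Y → CL X := fun A => ⟨Subtype.val '' A.1, A.2.1.image Subtype.val,
        hYcl.isClosedEmbedding_subtypeVal.isClosedMap A.1 A.2.2⟩ with hi
  have hdist : ∀ (y : ↥Y) (A : CL ↥Y), infDist (y : X) (i A).1 = infDist y A.1 :=
    fun y A => infDist_image isometry_subtype_coe
  have hcont : Continuous i := by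
    refine continuous_iInf_rng.2 fun x => continuous_induced_rng.2 ?_
    by_cases hx : x ∈ Y
    · exact (continuous_infDist_wijsman ↥Y ⟨x, hx⟩).congr fun A => (hdist ⟨x, hx⟩ A).symm
    · obtain ⟨η, -, hsub, hη⟩ := h x hx
      exact continuous_infDist_image X Y x η hsub hη
  have hind : IsInducing i := by
    refine ⟨le_antisymm hcont.le_induced (le_iInf fun y => ?_)⟩
    let : TopologicalSpace (CL ↥Y) := TopologicalSpace.induced i tX
    refine continuous_iff_le_induced.1 ?_
    exact ((continuous_infDist_wijsman X (y : X)).comp continuous_induced_dom).congr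
      fun A => hdist y A
  have hinj : Function.Injective i := fun A B hAB =>
    Subtype.ext (Subtype.val_injective.image_injective (congrArg Subtype.val hAB))
  refine ⟨⟨hind, hinj⟩, ?_⟩
  have hrange : range i = ⋂ x ∈ Yᶜ, {B : CL X | infDist x Y ≤ infDist x B.1} := by
    ext B
    simp only [mem_iInter, mem_ofPred_eq]
    constructor
    · rintro ⟨A, rfl⟩ x -
      refine infDist_le_infDist_of_subset ?_ (i A).2.1
      rintro _ ⟨y, -, rfl⟩
      exact y.2
    · intro hB
      have hBY : B.1 ⊆ Y := by
        intro x hxB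
        by_contra hx
        have h0 := hB x hx
        rw [infDist_zero_of_mem hxB] at h0
        exact hx ((hYcl.mem_iff_infDist_zero hYne).2 (le_antisymm h0 infDist_nonneg))
      have himg : Subtype.val '' (Subtype.val ⁻¹' B.1 : Set ↥Y) = B.1 := by
        rw [Subtype.image_preimage_coe, inter_eq_right.2 hBY]
      exact ⟨⟨Subtype.val ⁻¹' B.1, image_nonempty.1 (himg ▸ B.2.1),
        B.2.2.preimage continuous_subtype_val⟩, Subtype.ext himg⟩
  rw [hrange]
  exact isClosed_biInter fun x _ =>
    isClosed_le continuous_const (continuous_infDist_wijsman X x)
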